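/- Let c := 1/π − π + 2·∫₀¹ sin(2πy)/y dy. There exists a constant C > 0 such that for every integer a ≥ 2, |∫_{π/a}^{π/2} cos(2ax)/tan²(x) dx − c·a| ≤ C/a³; that is, this oscillatory integral equals c·a + O(a^{−3}) as a → ∞. -/

import Mathlib

open Real MeasureTheory

/-!
Since `(cot x)' = -1 / sin² x`, integrating by parts turns the integral over `(y, π/2)` into
boundary terms at `y` minus `2a ∫ sin(2ax) cot x`. For integer `a`, `sin(2ax) cot x` is the
modified Dirichlet kernel `∑_{k < a} (cos(2kx) + cos(2(k+1)x))`, whose integral over `(0, π/2)` is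
`π/2`, so only `2a ∫₀^y sin(2ax) cot x` with `y = π/a` remains. There
`cot x = 1/x - x/3 + O(x³)`: the polar part `1/x` yields the constant of the theorem, and the
linear part cancels, over a full period of `sin(2ax)`, against the term `-y/3` of the boundary
value `cot y`.
-/

section CotExpansion

lemma abs_le_of_abs_deriv_le_pow {f f' : ℝ → ℝ} {C x : ℝ} {n : ℕ}
    (hf : ∀ t, HasDerivAt f (f' t) t) (hf0 : f 0 = 0)
    (hf' : ∀ t, 0 ≤ t → |f' t| ≤ C * t ^ n) (hx : 0 ≤ x) :
    |f x| ≤ C / (n + 1) * x ^ (n + 1) := by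
  have hB (t : ℝ) : HasDerivAt (fun t ↦ C / (n + 1) * t ^ (n + 1)) (C * t ^ n) t := by
    refine ((hasDerivAt_pow (n + 1) t).const_mul (C / (n + 1))).congr_deriv ?_
    push_cast
    field_simp
  exact image_norm_le_of_norm_deriv_right_le_deriv_boundary
    (fun t _ ↦ (hf t).continuousAt.continuousWithinAt) (fun t _ ↦ (hf t).hasDerivWithinAt)
    (by simp [hf0]) hB (fun t ht ↦ hf' t ht.1) (Set.right_mem_Icc.2 hx)

lemma abs_mul_cos_sub_sin_le {x : ℝ} (hx : 0 ≤ x) : |x * cos x - sin x| ≤ x ^ 3 / 3 := by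
  have hderiv (t : ℝ) : HasDerivAt (fun t ↦ t * cos t - sin t) (-(t * sin t)) t :=
    (((hasDerivAt_id t).mul (hasDerivAt_cos t)).sub (hasDerivAt_sin t)).congr_deriv
      (by simp only [id]; ring)
  have hbound (t : ℝ) (ht : 0 ≤ t) : |-(t * sin t)| ≤ 1 * t ^ 2 := by
    rw [abs_neg, abs_mul, abs_of_nonneg ht, one_mul, sq]
    gcongr
    exact abs_sin_le_abs.trans_eq (abs_of_nonneg ht)
  refine (abs_le_of_abs_deriv_le_pow hderiv (by simp) hbound hx).trans_eq ?_
  norm_num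
  ring

lemma abs_mul_cos_sub_sin_add_sq_mul_sin_le {x : ℝ} (hx : 0 ≤ x) :
    |x * cos x - sin x + x ^ 2 * sin x / 3| ≤ x ^ 5 / 45 := by
  have hderiv (t : ℝ) : HasDerivAt (fun t ↦ t * cos t - sin t + t ^ 2 * sin t / 3)
      (t / 3 * (t * cos t - sin t)) t :=
    ((((hasDerivAt_id t).mul (hasDerivAt_cos t)).sub (hasDerivAt_sin t)).add
      (((hasDerivAt_pow 2 t).mul (hasDerivAt_sin t)).div_const 3)).congr_deriv
      (by simp only [id]; push_cast; ring)
  have hbound (t : ℝ) (ht : 0 ≤ t) : |t / 3 * (t * cos t - sin t)| ≤ 1 / 9 * t ^ 4 :=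
    calc |t / 3 * (t * cos t - sin t)| = t / 3 * |t * cos t - sin t| := by
          rw [abs_mul, abs_of_nonneg (by positivity)]
      _ ≤ t / 3 * (t ^ 3 / 3) := by gcongr; exact abs_mul_cos_sub_sin_le ht
      _ = 1 / 9 * t ^ 4 := by ring
  refine (abs_le_of_abs_deriv_le_pow hderiv (by simp) hbound hx).trans_eq ?_
  norm_num
  ring

/-- The remainder of the Laurent expansion `cot x = 1/x - x/3 + ⋯` at the origin, used to compare
`cot` with its singular part. -/
noncomputable def cotRemainder (x : ℝ) : ℝ := cot x - 1 / x + x / 3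

lemma abs_cotRemainder_le {x : ℝ} (hx0 : 0 < x) (hx : x ≤ π / 2) :
    |cotRemainder x| ≤ π / 90 * x ^ 3 := by
  have hsin_ge : 2 / π * x ≤ sin x := mul_le_sin hx0.le hx
  have hsin : 0 < sin x := lt_of_lt_of_le (by positivity) hsin_ge
  have hquot : cotRemainder x = (x * cos x - sin x + x ^ 2 * sin x / 3) / (x * sin x) := by
    rw [cotRemainder, cot_eq_cos_div_sin]
    field_simp
  rw [hquot, abs_div, abs_of_pos (mul_pos hx0 hsin), div_le_iff₀ (mul_pos hx0 hsin)]
  calc |x * cos x - sin x + x ^ 2 * sin x / 3| ≤ x ^ 5 / 45 :=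
        abs_mul_cos_sub_sin_add_sq_mul_sin_le hx0.le
    _ = π / 90 * x ^ 3 * (x * (2 / π * x)) := by field_simp; norm_num
    _ ≤ π / 90 * x ^ 3 * (x * sin x) := by gcongr

end CotExpansion

section ModifiedDirichletKernel

lemma sin_two_mul_nat_mul_cot (n : ℕ) {x : ℝ} (hx : sin x ≠ 0) :
    sin (2 * n * x) * cot x =
      ∑ k ∈ Finset.range n, (cos (2 * k * x) + cos (2 * (k + 1 : ℕ) * x)) := by
  have hterm (k : ℕ) :
      cos (2 * k * x) + cos (2 * (k + 1 : ℕ) * x) = 2 * cos x * cos (2 * x * k + x) := by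
    rw [show 2 * k * x = (2 * x * k + x) - x by ring,
      show 2 * (k + 1 : ℕ) * x = (2 * x * k + x) + x by push_cast; ring,
      cos_sub (2 * x * k + x) x, cos_add (2 * x * k + x) x]
    ring
  have hsum : sin x * ∑ k ∈ Finset.range n, cos (2 * x * k + x) = sin (n * x) * cos (n * x) := by
    convert sin_mul_sum_cos n (2 * x) x using 3 <;> ring
  rw [Finset.sum_congr rfl fun k _ ↦ hterm k, ← Finset.mul_sum, cot_eq_cos_div_sin,
    mul_assoc 2, sin_two_mul, mul_assoc 2, ← hsum]
  field_simp

lemma ae_sin_ne_zero : ∀ᵐ x : ℝ, sin x ≠ 0 := by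
  have hcountable : {x : ℝ | sin x = 0}.Countable :=
    (Set.countable_range fun k : ℤ ↦ (k : ℝ) * π).mono fun _ hx ↦ sin_eq_zero_iff.1 hx
  exact hcountable.ae_notMem volume

lemma sum_cos_ae_eq_sin_two_mul_nat_mul_cot (n : ℕ) :
    (fun x : ℝ ↦ ∑ k ∈ Finset.range n, (cos (2 * k * x) + cos (2 * (k + 1 : ℕ) * x))) =ᵐ[volume]
      fun x ↦ sin (2 * n * x) * cot x :=
  ae_sin_ne_zero.mono fun _ hx ↦ (sin_two_mul_nat_mul_cot n hx).symm

lemma intervalIntegrable_sin_two_mul_nat_mul_cot (n : ℕ) (a b : ℝ) :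
    IntervalIntegrable (fun x ↦ sin (2 * n * x) * cot x) volume a b :=
  (Continuous.intervalIntegrable (by fun_prop) a b).congr_ae
    (ae_restrict_of_ae (sum_cos_ae_eq_sin_two_mul_nat_mul_cot n))

lemma integral_cos_two_mul_nat (k : ℕ) :
    ∫ x in (0 : ℝ)..π / 2, cos (2 * k * x) = if k = 0 then π / 2 else 0 := by
  split_ifs with hk
  · simp [hk]
  · rw [intervalIntegral.integral_comp_mul_left (f := cos) (by positivity), integral_cos,
      show 2 * k * (π / 2) = k * π by ring]
    simp

lemma integral_sin_two_mul_nat_mul_cot {n : ℕ} (hn : n ≠ 0) :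
    ∫ x in (0 : ℝ)..π / 2, sin (2 * n * x) * cot x = π / 2 := by
  have hint (k : ℕ) : IntervalIntegrable (fun x : ℝ ↦ cos (2 * k * x)) volume 0 (π / 2) :=
    Continuous.intervalIntegrable (by fun_prop) _ _
  rw [← intervalIntegral.integral_congr_ae_restrict
      (ae_restrict_of_ae (sum_cos_ae_eq_sin_two_mul_nat_mul_cot n)),
    intervalIntegral.integral_finsetSum fun k _ ↦ (hint k).add (hint (k + 1))]
  simp only [intervalIntegral.integral_add (hint _) (hint _), integral_cos_two_mul_nat]
  simp [Nat.pos_of_ne_zero hn]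

end ModifiedDirichletKernel

section IntegrationByParts

lemma hasDerivAt_cot {x : ℝ} (hx : sin x ≠ 0) : HasDerivAt cot (-(1 / sin x ^ 2)) x := by
  rw [show cot = fun x ↦ cos x / sin x from funext cot_eq_cos_div_sin]
  refine ((hasDerivAt_cos x).div (hasDerivAt_sin x) hx).congr_deriv ?_
  field_simp
  linarith [sin_sq_add_cos_sq x]

lemma integral_cos_mul_div_sin_sq (ν : ℝ) {a b : ℝ} (h : ∀ x ∈ Set.uIcc a b, sin x ≠ 0) :
    ∫ x in a..b, cos (ν * x) / sin x ^ 2 =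
      cot a * cos (ν * a) - cot b * cos (ν * b) - ν * ∫ x in a..b, sin (ν * x) * cot x := by
  have hcot : ContinuousOn cot (Set.uIcc a b) := fun x hx ↦
    (hasDerivAt_cot (h x hx)).continuousAt.continuousWithinAt
  have hint_csc : IntervalIntegrable (fun x ↦ cos (ν * x) / sin x ^ 2) volume a b :=
    ContinuousOn.intervalIntegrable <|
      ContinuousOn.div (by fun_prop) (by fun_prop) fun x hx ↦ pow_ne_zero 2 (h x hx)
  have hint_cot : IntervalIntegrable (fun x ↦ ν * (sin (ν * x) * cot x)) volume a b :=
    ContinuousOn.intervalIntegrable (by fun_prop)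
  have hderiv (x : ℝ) (hx : x ∈ Set.uIcc a b) : HasDerivAt (fun x ↦ -(cot x * cos (ν * x)))
      (cos (ν * x) / sin x ^ 2 + ν * (sin (ν * x) * cot x)) x :=
    ((hasDerivAt_cot (h x hx)).mul
      ((hasDerivAt_id x).const_mul ν).cos).neg.congr_deriv (by simp only [id]; ring)
  have hftc := intervalIntegral.integral_eq_sub_of_hasDerivAt hderiv (hint_csc.add hint_cot)
  rw [intervalIntegral.integral_add hint_csc hint_cot, intervalIntegral.integral_const_mul] at hftc
  linarith

lemma integral_cos_mul_div_tan_sq {ν y : ℝ} (hν : ν ≠ 0) (hy0 : 0 < y) (hy : y ≤ π / 2) :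
    ∫ x in y..π / 2, cos (ν * x) / tan x ^ 2 =
      cot y * cos (ν * y) - ν * (∫ x in y..π / 2, sin (ν * x) * cot x)
        - (sin (ν * (π / 2)) - sin (ν * y)) / ν := by
  have hsin : ∀ x ∈ Set.uIcc y (π / 2), sin x ≠ 0 := by
    rw [Set.uIcc_of_le hy]
    exact fun x hx ↦
      (sin_pos_of_pos_of_lt_pi (hy0.trans_le hx.1) (by linarith [hx.2, pi_pos])).ne'
  have hsplit : Set.EqOn (fun x ↦ cos (ν * x) / tan x ^ 2)
      (fun x ↦ cos (ν * x) / sin x ^ 2 - cos (ν * x)) (Set.uIcc y (π / 2)) := fun x hx ↦ by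
    have hsin_x := hsin x hx
    simp only [tan_eq_sin_div_cos]
    field_simp
    rw [cos_sq']
  have hint : IntervalIntegrable (fun x ↦ cos (ν * x) / sin x ^ 2) volume y (π / 2) :=
    ContinuousOn.intervalIntegrable <|
      ContinuousOn.div (by fun_prop) (by fun_prop) fun x hx ↦ pow_ne_zero 2 (hsin x hx)
  rw [intervalIntegral.integral_congr hsplit,
    intervalIntegral.integral_sub hint (Continuous.intervalIntegrable (by fun_prop) _ _),
    integral_cos_mul_div_sin_sq ν hsin, intervalIntegral.integral_comp_mul_left (f := cos) hν,
    integral_cos, show cot (π / 2) = 0 by simp [cot_eq_cos_div_sin], smul_eq_mul]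
  ring

lemma integral_cos_two_mul_nat_div_tan_sq {n : ℕ} (hn : n ≠ 0) {y : ℝ} (hy0 : 0 < y)
    (hy : y ≤ π / 2) :
    ∫ x in y..π / 2, cos (2 * n * x) / tan x ^ 2 =
      cot y * cos (2 * n * y) + sin (2 * n * y) / (2 * n) - n * π
        + 2 * n * ∫ x in (0 : ℝ)..y, sin (2 * n * x) * cot x := by
  have hadj := intervalIntegral.integral_add_adjacent_intervals
    (intervalIntegrable_sin_two_mul_nat_mul_cot n 0 y)
    (intervalIntegrable_sin_two_mul_nat_mul_cot n y (π / 2))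
  rw [integral_sin_two_mul_nat_mul_cot hn] at hadj
  rw [integral_cos_mul_div_tan_sq (by positivity) hy0 hy, eq_sub_of_add_eq' hadj,
    show 2 * n * (π / 2) = n * π by ring, sin_nat_mul_pi]
  ring

end IntegrationByParts

section SingularPart

lemma intervalIntegrable_sin_mul_div (ν a b : ℝ) :
    IntervalIntegrable (fun x ↦ sin (ν * x) / x) volume a b := by
  have hsinc : Continuous fun x ↦ ν * sinc (ν * x) :=
    continuous_const.mul (continuous_sinc.comp (continuous_const_mul ν))
  refine (hsinc.intervalIntegrable a b).congr_ae (ae_restrict_of_ae ?_)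
  filter_upwards [volume.ae_ne 0] with x hx
  rcases eq_or_ne ν 0 with rfl | hν
  · simp
  · rw [sinc_of_ne_zero (mul_ne_zero hν hx)]
    field_simp

lemma integral_sin_mul_div (ν y : ℝ) :
    ∫ x in (0 : ℝ)..y, sin (ν * x) / x = ∫ t in (0 : ℝ)..1, sin (ν * y * t) / t := by
  rcases eq_or_ne y 0 with rfl | hy
  · simp
  have hsubst := intervalIntegral.mul_integral_comp_mul_left (a := 0) (b := 1) y
    (f := fun x ↦ sin (ν * x) / x)
  rw [mul_zero, mul_one] at hsubst
  rw [← hsubst, ← intervalIntegral.integral_const_mul]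
  refine intervalIntegral.integral_congr fun t _ ↦ ?_
  simp only [← mul_assoc]
  field_simp

lemma integral_id_mul_sin_mul {ν : ℝ} (hν : ν ≠ 0) (y : ℝ) :
    ∫ x in (0 : ℝ)..y, x * sin (ν * x) = sin (ν * y) / ν ^ 2 - y * cos (ν * y) / ν := by
  have hderiv (x : ℝ) : HasDerivAt (fun x ↦ sin (ν * x) / ν ^ 2 - x * cos (ν * x) / ν)
      (x * sin (ν * x)) x := by
    have hlin : HasDerivAt (fun x ↦ ν * x) (ν * 1) x := (hasDerivAt_id x).const_mul ν
    refine ((hlin.sin.div_const (ν ^ 2)).sub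
      (((hasDerivAt_id x).mul hlin.cos).div_const ν)).congr_deriv ?_
    simp only [id]
    field_simp
    ring
  rw [intervalIntegral.integral_eq_sub_of_hasDerivAt (fun x _ ↦ hderiv x)
    (Continuous.intervalIntegrable (by fun_prop) _ _)]
  simp

lemma integral_sin_two_mul_nat_mul_cot_eq_add_cotRemainder (n : ℕ) (y : ℝ) :
    ∫ x in (0 : ℝ)..y, sin (2 * n * x) * cot x =
      (∫ x in (0 : ℝ)..y, sin (2 * n * x) / x) - (∫ x in (0 : ℝ)..y, x * sin (2 * n * x)) / 3
        + ∫ x in (0 : ℝ)..y, sin (2 * n * x) * cotRemainder x := by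
  have hcot := intervalIntegrable_sin_two_mul_nat_mul_cot n 0 y
  have hpole := intervalIntegrable_sin_mul_div (2 * n) 0 y
  have hlin : IntervalIntegrable (fun x : ℝ ↦ x * sin (2 * n * x) / 3) volume 0 y :=
    Continuous.intervalIntegrable (by fun_prop) 0 y
  have hrem : ∫ x in (0 : ℝ)..y, sin (2 * n * x) * cotRemainder x =
      ∫ x in (0 : ℝ)..y,
        (sin (2 * n * x) * cot x - sin (2 * n * x) / x + x * sin (2 * n * x) / 3) := by
    congr! 2 with x
    rw [cotRemainder]
    ring
  rw [hrem, intervalIntegral.integral_add (hcot.sub hpole) hlin,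
    intervalIntegral.integral_sub hcot hpole, intervalIntegral.integral_div]
  ring

end SingularPart

lemma integral_cos_two_mul_nat_div_tan_sq_sub_eq_cotRemainder {n : ℕ} (hn : 2 ≤ n) :
    (∫ x in π / n..π / 2, cos (2 * n * x) / tan x ^ 2)
        - (1 / π - π + 2 * ∫ t in (0 : ℝ)..1, sin (2 * π * t) / t) * n =
      cotRemainder (π / n)
        + 2 * n * ∫ x in (0 : ℝ)..π / n, sin (2 * n * x) * cotRemainder x := by
  have hn0 : n ≠ 0 := by positivity
  have hy : π / n ≤ π / 2 := by gcongr; exact_mod_cast hn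
  have hperiod : 2 * n * (π / n) = 2 * π := by field_simp
  rw [integral_cos_two_mul_nat_div_tan_sq hn0 (by positivity) hy,
    integral_sin_two_mul_nat_mul_cot_eq_add_cotRemainder, integral_sin_mul_div,
    integral_id_mul_sin_mul (by positivity), hperiod, sin_two_pi, cos_two_pi, cotRemainder]
  field_simp
  ring

lemma abs_integral_sin_mul_cotRemainder_le (ν : ℝ) {y : ℝ} (hy0 : 0 ≤ y) (hy : y ≤ π / 2) :
    |∫ x in (0 : ℝ)..y, sin (ν * x) * cotRemainder x| ≤ π / 90 * y ^ 4 := by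
  have hbound (x : ℝ) (hx : x ∈ Set.uIoc 0 y) :
      ‖sin (ν * x) * cotRemainder x‖ ≤ π / 90 * y ^ 3 := by
    rw [Set.uIoc_of_le hy0] at hx
    have hx0 : 0 < x := hx.1
    have hxy : x ≤ y := hx.2
    calc ‖sin (ν * x) * cotRemainder x‖ = |sin (ν * x)| * |cotRemainder x| := norm_mul _ _
      _ ≤ 1 * (π / 90 * x ^ 3) := by
        gcongr
        exacts [abs_sin_le_one _, abs_cotRemainder_le hx0 (hxy.trans hy)]
      _ ≤ π / 90 * y ^ 3 := by rw [one_mul]; gcongr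
  calc |∫ x in (0 : ℝ)..y, sin (ν * x) * cotRemainder x| ≤ π / 90 * y ^ 3 * |y - 0| :=
        intervalIntegral.norm_integral_le_of_norm_le_const hbound
    _ = π / 90 * y ^ 4 := by rw [sub_zero, abs_of_nonneg hy0]; ring

/-- With `c := 1/π − π + 2·∫₀¹ sin(2πy)/y dy`, there is a constant `C > 0` such that
for every integer `a ≥ 2`, `|∫_{π/a}^{π/2} cos(2ax)/tan²(x) dx − c·a| ≤ C/a³`;
that is, this oscillatory integral equals `c·a + O(a⁻³)` as `a → ∞`. -/
theorem oscillatory_integral_cos_even_over_tan_sq :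
    ∃ C > (0 : ℝ), ∀ a : ℕ, 2 ≤ a →
      |(∫ x in Set.Ioo (Real.pi / (a : ℝ)) (Real.pi / 2),
          Real.cos (2 * (a : ℝ) * x) / Real.tan x ^ 2) -
        (1 / Real.pi - Real.pi +
          2 * ∫ y in Set.Ioo (0 : ℝ) 1, Real.sin (2 * Real.pi * y) / y) * (a : ℝ)| ≤
      C / (a : ℝ) ^ 3 := by
  refine ⟨π / 90 * (1 + 2 * π) * π ^ 3, by positivity, fun a ha ↦ ?_⟩
  have hy0 : 0 < π / a := by positivity
  have hy : π / a ≤ π / 2 := by gcongr; exact_mod_cast ha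
  rw [← integral_Ioc_eq_integral_Ioo, ← integral_Ioc_eq_integral_Ioo,
    ← intervalIntegral.integral_of_le hy, ← intervalIntegral.integral_of_le zero_le_one,
    integral_cos_two_mul_nat_div_tan_sq_sub_eq_cotRemainder ha]
  calc |cotRemainder (π / a) + 2 * a * ∫ x in (0 : ℝ)..π / a, sin (2 * a * x) * cotRemainder x|
      ≤ |cotRemainder (π / a)|
          + 2 * a * |∫ x in (0 : ℝ)..π / a, sin (2 * a * x) * cotRemainder x| := by
        refine (abs_add_le _ _).trans_eq ?_
        rw [abs_mul, abs_of_nonneg (by positivity : (0 : ℝ) ≤ 2 * a)]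
    _ ≤ π / 90 * (π / a) ^ 3 + 2 * a * (π / 90 * (π / a) ^ 4) := by
        gcongr
        exacts [abs_cotRemainder_le hy0 hy, abs_integral_sin_mul_cotRemainder_le _ hy0.le hy]
    _ = π / 90 * (1 + 2 * π) * π ^ 3 / a ^ 3 := by field_simp
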